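/- With U_k as in the Chebyshev-type recurrence U_0 = B, U_1 = 2cos(X)B, U_k = 2cos(kX)B + U_{k-2}, one has sinc(X)·U_{k-1} = k·sinc(kX)·B for all k ≥ 1, where sinc X = Σ_{j≥0} (-1)^j X^{2j}/(2j+1)!. -/

import Mathlib

/-- Matrix cosine, defined by its power series. -/
noncomputable def mcos {ι : Type} [Fintype ι] [DecidableEq ι]
    (X : Matrix ι ι ℂ) : Matrix ι ι ℂ :=
  ∑' k : ℕ, (((-1 : ℂ) ^ k / (Nat.factorial (2 * k)) : ℂ)) • X ^ (2 * k)

/-- Matrix sine, defined by its power series. -/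
noncomputable def msin {ι : Type} [Fintype ι] [DecidableEq ι]
    (X : Matrix ι ι ℂ) : Matrix ι ι ℂ :=
  ∑' k : ℕ, (((-1 : ℂ) ^ k / (Nat.factorial (2 * k + 1)) : ℂ)) • X ^ (2 * k + 1)

/-- Matrix sinc, defined by its power series. -/
noncomputable def msinc {ι : Type} [Fintype ι] [DecidableEq ι]
    (X : Matrix ι ι ℂ) : Matrix ι ι ℂ :=
  ∑' k : ℕ, (((-1 : ℂ) ^ k / (Nat.factorial (2 * k + 1)) : ℂ)) • X ^ (2 * k)

/-- Matrix hyperbolic cosine, defined by its power series. -/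
noncomputable def mcosh {ι : Type} [Fintype ι] [DecidableEq ι]
    (X : Matrix ι ι ℂ) : Matrix ι ι ℂ :=
  ∑' k : ℕ, ((1 / (Nat.factorial (2 * k)) : ℂ)) • X ^ (2 * k)

/-- Matrix hyperbolic sine, defined by its power series. -/
noncomputable def msinh {ι : Type} [Fintype ι] [DecidableEq ι]
    (X : Matrix ι ι ℂ) : Matrix ι ι ℂ :=
  ∑' k : ℕ, ((1 / (Nat.factorial (2 * k + 1)) : ℂ)) • X ^ (2 * k + 1)

/-- Matrix hyperbolic sinc, defined by its power series. -/
noncomputable def msinch {ι : Type} [Fintype ι] [DecidableEq ι]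
    (X : Matrix ι ι ℂ) : Matrix ι ι ℂ :=
  ∑' k : ℕ, ((1 / (Nat.factorial (2 * k + 1)) : ℂ)) • X ^ (2 * k)

/-- Matrix exponential, defined by its power series. -/
noncomputable def mexp {ι : Type} [Fintype ι] [DecidableEq ι]
    (X : Matrix ι ι ℂ) : Matrix ι ι ℂ :=
  ∑' k : ℕ, ((1 / (Nat.factorial k) : ℂ)) • X ^ k

/-- `cos(t√A)` expressed as a power series in `A` (independent of the square root). -/
noncomputable def cosOfSq {ι : Type} [Fintype ι] [DecidableEq ι]
    (A : Matrix ι ι ℂ) (t : ℂ) : Matrix ι ι ℂ :=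
  ∑' k : ℕ, (((-1 : ℂ) ^ k * t ^ (2 * k) / (Nat.factorial (2 * k)) : ℂ)) • A ^ k

/-- `sinc(t√A)` expressed as a power series in `A` (independent of the square root). -/
noncomputable def sincOfSq {ι : Type} [Fintype ι] [DecidableEq ι]
    (A : Matrix ι ι ℂ) (t : ℂ) : Matrix ι ι ℂ :=
  ∑' k : ℕ, (((-1 : ℂ) ^ k * t ^ (2 * k) / (Nat.factorial (2 * k + 1)) : ℂ)) • A ^ k

/-!
The obstacle is that `x * sinc x = sin x` cannot be divided by `x`, which need not be invertible.
Instead, write `u'' = -x² u` as a first-order system with coefficient matrix `M = !![0, 1; -x², 0]`: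
then `exp (t M) = !![cos (t x), t sinc (t x); -x sin (t x), cos (t x)]`, and comparing the upper
right entries of `exp ((s + t) M) = exp (s M) exp (t M)` gives the addition formula for
`t sinc (t x)`, already divided by `x`. The resulting product-to-sum formula
`2 sinc x cos (t x) = (t + 1) sinc ((t + 1) x) - (t - 1) sinc ((t - 1) x)` telescopes along the
recurrence.
-/

open NormedSpace Matrix
open scoped Nat

section Series

variable (𝕜 : Type*) {A : Type*} [Field 𝕜] [Ring A] [Algebra 𝕜 A] [TopologicalSpace A]

/-- The cosine of an element of a topological `𝕜`-algebra, as a power series with coefficients in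
`𝕜`; it extends `mcos` from matrices to Banach algebras. It is `0` if the series diverges. -/
noncomputable def seriesCos (x : A) : A :=
  ∑' k : ℕ, ((-1 : 𝕜) ^ k / (2 * k)! : 𝕜) • x ^ (2 * k)

/-- The cardinal sine of an element of a topological `𝕜`-algebra, as a power series with
coefficients in `𝕜`; it extends `msinc` from matrices to Banach algebras. It is `0` if the series
diverges. -/
noncomputable def seriesSinc (x : A) : A :=
  ∑' k : ℕ, ((-1 : 𝕜) ^ k / (2 * k + 1)! : 𝕜) • x ^ (2 * k)

theorem seriesSinc_neg (x : A) : seriesSinc 𝕜 (-x) = seriesSinc 𝕜 x := by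
  simp only [seriesSinc, (even_two_mul _).neg_pow]

theorem seriesCos_neg (x : A) : seriesCos 𝕜 (-x) = seriesCos 𝕜 x := by
  simp only [seriesCos, (even_two_mul _).neg_pow]

end Series

section Oscillator

variable {R A : Type*} [CommRing R] [Ring A] [Algebra R A]

/-- The coefficient matrix of `u'' = -x² u`, written as a first-order system for `(u, u')`. -/
def oscillator (x : A) : Matrix (Fin 2) (Fin 2) A :=
  !![0, 1; -x ^ 2, 0]

theorem smul_oscillator_sq (x : A) (t : R) :
    (t • oscillator x) ^ 2 = scalar (Fin 2) (-(t • x) ^ 2) := by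
  ext i j
  fin_cases i <;> fin_cases j <;> simp [oscillator, sq, mul_apply]

theorem smul_oscillator_pow_two_mul (x : A) (t : R) (k : ℕ) :
    (t • oscillator x) ^ (2 * k) = scalar (Fin 2) ((-1 : R) ^ k • (t • x) ^ (2 * k)) := by
  rw [pow_mul, smul_oscillator_sq, ← map_pow, neg_pow, ← pow_mul,
    Algebra.smul_def ((-1 : R) ^ k), map_pow, map_neg, map_one]

theorem smul_oscillator_pow_two_mul_add_one (x : A) (t : R) (k : ℕ) :
    (t • oscillator x) ^ (2 * k + 1) =
      scalar (Fin 2) ((-1 : R) ^ k • (t • x) ^ (2 * k)) * t • oscillator x := by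
  rw [pow_succ, smul_oscillator_pow_two_mul]

end Oscillator

section MatrixExp

variable (𝕜 : Type*) {A ι : Type*} [RCLike 𝕜] [NormedRing A] [NormedAlgebra 𝕜 A] [CompleteSpace A]
  [Fintype ι] [DecidableEq ι]

open scoped Norms.Operator in
theorem matrix_exp_apply_eq_tsum (M : Matrix ι ι A) (i j : ι) :
    exp M i j = ∑' n : ℕ, (n !⁻¹ : 𝕜) • (M ^ n) i j := by
  -- The completeness instance is passed by hand: its uniformity agrees with that of the operator
  -- norm only after unfolding.
  have hasSum_exp : HasSum (fun n : ℕ ↦ (n !⁻¹ : 𝕜) • M ^ n) (exp M) :=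
    @exp_series_hasSum_exp' 𝕜 (Matrix ι ι A) _ _ _ _ _
      (inferInstanceAs (CompleteSpace (ι → ι → A))) M
  exact (hasSum_exp.map (entryAddMonoidHom A i j) (continuous_id.matrix_elem i j)).tsum_eq.symm

theorem matrix_exp_apply_eq_tsum_even {M : Matrix ι ι A} {i j : ι}
    (hM : ∀ k, (M ^ (2 * k + 1)) i j = 0) :
    exp M i j = ∑' k : ℕ, ((2 * k)!⁻¹ : 𝕜) • (M ^ (2 * k)) i j := by
  rw [matrix_exp_apply_eq_tsum 𝕜]
  refine ((mul_right_injective₀ two_ne_zero).tsum_eq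
    (Function.support_subset_iff'.2 fun n hn ↦ ?_)).symm
  obtain ⟨k, rfl⟩ : Odd n := by simpa using hn
  rw [hM, smul_zero]

theorem matrix_exp_apply_eq_tsum_odd {M : Matrix ι ι A} {i j : ι}
    (hM : ∀ k, (M ^ (2 * k)) i j = 0) :
    exp M i j = ∑' k : ℕ, ((2 * k + 1)!⁻¹ : 𝕜) • (M ^ (2 * k + 1)) i j := by
  rw [matrix_exp_apply_eq_tsum 𝕜]
  refine (((add_left_injective 1).comp (mul_right_injective₀ two_ne_zero)).tsum_eq
    (Function.support_subset_iff'.2 fun n hn ↦ ?_)).symm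
  obtain ⟨k, rfl⟩ : Even n := by simpa [Function.comp_def] using hn
  rw [← two_mul, hM, smul_zero]

end MatrixExp

section BanachAlgebra

variable {𝕜 A : Type*} [RCLike 𝕜] [NormedRing A] [NormedAlgebra 𝕜 A] [CompleteSpace A]

theorem exp_smul_oscillator_apply_self (x : A) (t : 𝕜) (i : Fin 2) :
    exp (t • oscillator x) i i = seriesCos 𝕜 (t • x) := by
  have odd_pow (k : ℕ) : ((t • oscillator x) ^ (2 * k + 1)) i i = 0 := by
    rw [smul_oscillator_pow_two_mul_add_one]
    fin_cases i <;> simp [oscillator]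
  rw [matrix_exp_apply_eq_tsum_even 𝕜 odd_pow, seriesCos]
  refine tsum_congr fun k ↦ ?_
  rw [smul_oscillator_pow_two_mul, scalar_apply, diagonal_apply_eq, smul_smul, div_eq_inv_mul]

theorem exp_smul_oscillator_zero_one (x : A) (t : 𝕜) :
    exp (t • oscillator x) 0 1 = t • seriesSinc 𝕜 (t • x) := by
  have even_pow (k : ℕ) : ((t • oscillator x) ^ (2 * k)) 0 1 = 0 := by
    simp [smul_oscillator_pow_two_mul]
  have odd_pow (k : ℕ) : ((t • oscillator x) ^ (2 * k + 1)) 0 1 =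
      t • (-1 : 𝕜) ^ k • (t • x) ^ (2 * k) := by
    rw [smul_oscillator_pow_two_mul_add_one]
    simp [oscillator]
  rw [matrix_exp_apply_eq_tsum_odd 𝕜 even_pow, seriesSinc, ← tsum_const_smul'']
  refine tsum_congr fun k ↦ ?_
  rw [odd_pow, smul_comm, smul_smul _ ((-1 : 𝕜) ^ k), div_eq_inv_mul]

theorem add_smul_seriesSinc (x : A) (s t : 𝕜) :
    (s + t) • seriesSinc 𝕜 ((s + t) • x) =
      seriesCos 𝕜 (s • x) * t • seriesSinc 𝕜 (t • x) +
        s • seriesSinc 𝕜 (s • x) * seriesCos 𝕜 (t • x) := by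
  let +nondep : NormedAlgebra ℚ A := .restrictScalars ℚ 𝕜 A
  have hcomm : Commute (s • oscillator x) (t • oscillator x) :=
    ((Commute.refl _).smul_left s).smul_right t
  rw [← exp_smul_oscillator_zero_one, add_smul, exp_add_of_commute _ _ hcomm, mul_apply,
    Fin.sum_univ_two]
  simp only [exp_smul_oscillator_zero_one, exp_smul_oscillator_apply_self]

theorem add_smul_seriesSinc_eq_two_nsmul_add_sub_smul (x : A) (s t : 𝕜) :
    (t + s) • seriesSinc 𝕜 ((t + s) • x) =
      2 • (s • seriesSinc 𝕜 (s • x) * seriesCos 𝕜 (t • x)) +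
        (t - s) • seriesSinc 𝕜 ((t - s) • x) := by
  have sub_eq : (t - s) • seriesSinc 𝕜 ((t - s) • x) =
      seriesCos 𝕜 (s • x) * t • seriesSinc 𝕜 (t • x) -
        s • seriesSinc 𝕜 (s • x) * seriesCos 𝕜 (t • x) := by
    rw [sub_eq_neg_add, add_smul_seriesSinc]
    simp only [neg_smul, seriesSinc_neg, seriesCos_neg, neg_mul, sub_eq_add_neg]
  rw [sub_eq, add_comm t s, add_smul_seriesSinc, two_nsmul]
  abel

variable {V : Type*} [AddCommGroup V] [Module 𝕜 V] [Module A V] [IsScalarTower 𝕜 A V]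

theorem seriesSinc_smul_two_nsmul_add (x : A) (b : V) (t : 𝕜) {u : V}
    (hu : seriesSinc 𝕜 x • u = (t - 1) • seriesSinc 𝕜 ((t - 1) • x) • b) :
    seriesSinc 𝕜 x • (2 • seriesCos 𝕜 (t • x) • b + u) =
      (t + 1) • seriesSinc 𝕜 ((t + 1) • x) • b := by
  have h := congrArg (· • b) (add_smul_seriesSinc_eq_two_nsmul_add_sub_smul x 1 t)
  simp only [one_smul, add_smul _ _ b, smul_assoc, mul_smul] at h
  rw [h, smul_add, hu, smul_comm _ 2]

theorem stmt3_general (x : A) (b : V) (U : ℕ → V)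
    (hU0 : U 0 = b) (hU1 : U 1 = 2 • (seriesCos 𝕜 x • b))
    (hU : ∀ k, 2 ≤ k → U k = 2 • (seriesCos 𝕜 ((k : 𝕜) • x) • b) + U (k - 2)) :
    ∀ k, 1 ≤ k → seriesSinc 𝕜 x • U (k - 1) = (k : 𝕜) • (seriesSinc 𝕜 ((k : 𝕜) • x) • b) := by
  suffices h : ∀ k, seriesSinc 𝕜 x • U k = (k + 1 : 𝕜) • seriesSinc 𝕜 ((k + 1 : 𝕜) • x) • b by
    intro k hk
    simpa [hk] using h (k - 1)
  intro k
  induction k using Nat.twoStepInduction with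
  | zero => simp [hU0]
  | one => simpa [hU1] using seriesSinc_smul_two_nsmul_add x b (1 : 𝕜) (u := 0) (by simp)
  | more k ih _ =>
    rw [hU (k + 2) (by omega), Nat.add_sub_cancel]
    refine seriesSinc_smul_two_nsmul_add x b _ ?_
    convert ih using 3 <;> push_cast <;> ring_nf

end BanachAlgebra

namespace MatrixLeftMul

variable {R ι κ : Type*} [Semiring R] [Fintype ι] [DecidableEq ι]

/-- The action of square matrices on rectangular ones by left multiplication, through which
`stmt3_general` covers a rectangular `B`. It is scoped because it competes with `Mul.toSMul` when
`κ` is `ι`. -/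
scoped instance instModule : Module (Matrix ι ι R) (Matrix ι κ R) where
  smul M B := M * B
  one_smul := Matrix.one_mul
  mul_smul := Matrix.mul_assoc
  smul_zero := Matrix.mul_zero
  smul_add := Matrix.mul_add
  add_smul := Matrix.add_mul
  zero_smul := Matrix.zero_mul

scoped instance instIsScalarTower : IsScalarTower R (Matrix ι ι R) (Matrix ι κ R) where
  smul_assoc := Matrix.smul_mul

end MatrixLeftMul

theorem stmt3 {n n₀ : ℕ} (X : Matrix (Fin n) (Fin n) ℂ) (B : Matrix (Fin n) (Fin n₀) ℂ)
    (U : ℕ → Matrix (Fin n) (Fin n₀) ℂ)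
    (hU0 : U 0 = B) (hU1 : U 1 = 2 • (mcos X * B))
    (hU : ∀ k, 2 ≤ k → U k = 2 • (mcos ((k : ℂ) • X) * B) + U (k - 2)) :
    ∀ k, 1 ≤ k → msinc X * U (k - 1) = (k : ℂ) • (msinc ((k : ℂ) • X) * B) := by
  open scoped MatrixLeftMul Norms.Operator in
  exact stmt3_general X B U hU0 hU1 hU
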